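/- Let η > 0, let ℓ ≥ 2 and let r₂, …, r_ℓ be positive integers. Then there exists ρ > 0 and n₀ such that for every d ∈ (0,1] and every (ρ,d)-dense graph G with at least n₀ vertices, t_{K(1,r₂,r₃,…,r_ℓ)}(G) ≥ (d^{r₂} − η) · t_{K(r₂+1,r₃,…,r_ℓ)}(G). -/

import Mathlib

open MeasureTheory

/-- The homomorphism density `t_H(G)`. -/
noncomputable def homDensity {α β : Type*} [Fintype α] [Fintype β]
    (H : SimpleGraph α) (G : SimpleGraph β) : ℝ :=
  (Nat.card (H →g G) : ℝ) / (Fintype.card β : ℝ) ^ (Fintype.card α)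

/-- The number of edges of a graph. -/
noncomputable def edgeCount {α : Type*} (H : SimpleGraph α) : ℕ :=
  Nat.card H.edgeSet

/-- `G` is `(ρ,d)`-dense: every vertex subset `X` with `|X| ≥ ρ|V(G)|`
spans at least `(d/2)|X|²` edges. -/
def LocallyDense {β : Type*} [Fintype β] (G : SimpleGraph β) (ρ d : ℝ) : Prop :=
  ∀ X : Finset β, ρ * (Fintype.card β : ℝ) ≤ (X.card : ℝ) →
    d / 2 * (X.card : ℝ) ^ 2 ≤
      (Nat.card {e : Sym2 β // e ∈ G.edgeSet ∧ ∀ v ∈ e, v ∈ X} : ℝ)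

open Classical in
/-- Number of neighbours of `v` inside `X`. -/
noncomputable def nbrIn {β : Type} (G : SimpleGraph β) (X : Finset β) (v : β) : Finset β :=
  {w ∈ X | G.Adj v w}

open Classical in
lemma two_edges_le {β : Type} [Fintype β] (G : SimpleGraph β) (X : Finset β) :
    2 * Nat.card {e : Sym2 β // e ∈ G.edgeSet ∧ ∀ v ∈ e, v ∈ X}
      = ∑ v ∈ X, (nbrIn G X v).card := by
  let G' : SimpleGraph β :=
    { Adj := fun a b => G.Adj a b ∧ a ∈ X ∧ b ∈ X
      symm := ⟨fun a b h => ⟨h.1.symm, h.2.2, h.2.1⟩⟩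
      loopless := ⟨fun a h => G.loopless.irrefl a h.1⟩ }
  have h1 : Nat.card {e : Sym2 β // e ∈ G.edgeSet ∧ ∀ v ∈ e, v ∈ X} = G'.edgeFinset.card := by
    rw [Nat.card_eq_fintype_card, Fintype.card_subtype]
    congr 1
    ext e
    induction e using Sym2.ind with
    | _ a b => simp [G']
  rw [h1, ← G'.sum_degrees_eq_twice_card_edges]
  have h2 : ∀ v, G'.degree v = if v ∈ X then (nbrIn G X v).card else 0 := by
    intro v
    rw [← SimpleGraph.card_neighborFinset_eq_degree]
    split_ifs with h
    · congr 1
      ext w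
      simp [G', nbrIn, h]
      tauto
    · rw [Finset.card_eq_zero]
      ext w
      simp [G', h]
  rw [Finset.sum_congr rfl (fun v _ => h2 v), Finset.sum_ite_mem, Finset.univ_inter]

lemma dense_sum {β : Type} [Fintype β] {G : SimpleGraph β} {ρ d : ℝ}
    (hG : LocallyDense G ρ d) (X : Finset β) (hX : ρ * (Fintype.card β : ℝ) ≤ X.card) :
    d * (X.card : ℝ) ^ 2 ≤ ∑ v ∈ X, ((nbrIn G X v).card : ℝ) := by
  have h := hG X hX
  have h2 := two_edges_le G X
  have h3 : (2 : ℝ) * (Nat.card {e : Sym2 β // e ∈ G.edgeSet ∧ ∀ v ∈ e, v ∈ X} : ℝ)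
      = ∑ v ∈ X, ((nbrIn G X v).card : ℝ) := by exact_mod_cast h2
  linarith

/-- number of ordered cliques -/
noncomputable def cnt {β : Type} (G : SimpleGraph β) : ℕ → Finset β → ℕ
  | 0, _ => 1
  | M + 1, X => ∑ v ∈ X, cnt G M (nbrIn G X v)

open Classical in
lemma cnt_le {β : Type} [Fintype β] (G : SimpleGraph β) (M : ℕ) : ∀ X : Finset β,
    cnt G M X ≤ (Finset.univ.filter (fun f : Fin M → β =>
      (∀ i j, i < j → G.Adj (f i) (f j)) ∧ ∀ i, f i ∈ X)).card := by
  induction M with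
  | zero => intro X; simp [cnt]
  | succ M ih =>
    intro X
    rw [cnt]
    refine (Finset.sum_le_sum (fun v _ => ih (nbrIn G X v))).trans ?_
    rw [← Finset.card_sigma]
    refine Finset.card_le_card_of_injOn (fun p => Fin.cons p.1 p.2) ?_ ?_
    · rintro ⟨v, f⟩ h
      simp [nbrIn] at h
      obtain ⟨hv, h1, h2⟩ := h
      simp only [Finset.coe_filter, Finset.mem_univ, true_and, Set.mem_ofPred_eq]
      constructor
      · intro i j hij
        induction i using Fin.cases with
        | zero =>
          induction j using Fin.cases with
          | zero => simp at hij
          | succ j => simpa using (h2 j).2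
        | succ i =>
          induction j using Fin.cases with
          | zero => simp at hij
          | succ j => simpa using h1 i j (by simpa using hij)
      · intro i
        induction i using Fin.cases with
        | zero => simpa using hv
        | succ i => simpa using (h2 i).1
    · rintro ⟨v, f⟩ _ ⟨w, g⟩ _ h
      have := Fin.cons_injective2 h
      obtain ⟨rfl, rfl⟩ := this
      rfl

lemma cnt_le_hom {α β : Type} [Fintype α] [Fintype β] (H : SimpleGraph α) (G : SimpleGraph β) :
    cnt G (Fintype.card α) Finset.univ ≤ Nat.card (H →g G) := by
  classical
  refine (cnt_le G _ _).trans ?_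
  rw [← Fintype.card_subtype, ← Nat.card_eq_fintype_card]
  let e := Fintype.equivFin α
  refine Nat.card_le_card_of_injective
    (fun f => (⟨fun a => f.1 (e a), ?_⟩ : H →g G)) ?_
  · intro a b hab
    have hne : e a ≠ e b := fun h => hab.ne (e.injective h)
    rcases lt_or_gt_of_ne hne with h | h
    · exact f.2.1 _ _ h
    · exact (f.2.1 _ _ h).symm
  · intro f g h
    apply Subtype.ext
    funext i
    have := DFunLike.congr_fun h (e.symm i)
    simpa using this

lemma cnt_lower {β : Type} [Fintype β] {G : SimpleGraph β} {ρ c : ℝ} (hc : 0 < c) (hc1 : c ≤ 1)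
    (hG : LocallyDense G ρ (2 * c)) (M : ℕ) : ∀ X : Finset β,
    ρ * (Fintype.card β : ℝ) ≤ c ^ M * X.card →
    c ^ (M ^ 2) * (X.card : ℝ) ^ M ≤ cnt G M X := by
  classical
  induction M with
  | zero => intro X _; simp [cnt]
  | succ M ih =>
    intro X hX
    rcases Nat.eq_zero_or_pos X.card with h0 | hpos
    · simp [h0]
    have hx : (0 : ℝ) < X.card := by exact_mod_cast hpos
    have hX1 : ρ * (Fintype.card β : ℝ) ≤ X.card :=
      hX.trans (mul_le_of_le_one_left hx.le (pow_le_one₀ hc.le hc1))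
    have hs := dense_sum hG X hX1
    set x : ℝ := (X.card : ℝ) with hxdef
    let S := X.filter (fun v => c * x ≤ ((nbrIn G X v).card : ℝ))
    have hub : ∑ v ∈ X, ((nbrIn G X v).card : ℝ) ≤ S.card * x + x * (c * x) := by
      have : ∀ v ∈ X, ((nbrIn G X v).card : ℝ) ≤
          (if c * x ≤ ((nbrIn G X v).card : ℝ) then x else 0) + c * x := by
        intro v _
        have hcx : 0 < c * x := by positivity
        split_ifs with h
        · have : ((nbrIn G X v).card : ℝ) ≤ x := by
            rw [hxdef]; exact_mod_cast Finset.card_le_card (Finset.filter_subset (G.Adj v) X)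
          linarith
        · linarith
      refine (Finset.sum_le_sum this).trans ?_
      rw [Finset.sum_add_distrib, ← Finset.sum_filter]
      simp [S, ← hxdef]
    have hS : c * x ≤ S.card := by
      have : (c * x) * x ≤ S.card * x := by nlinarith
      exact le_of_mul_le_mul_right this hx
    rw [cnt]
    push_cast
    have hstep : ∀ v ∈ S, c ^ (M ^ 2) * (c * x) ^ M ≤ (cnt G M (nbrIn G X v) : ℝ) := by
      intro v hv
      have hv2 := (Finset.mem_filter.1 hv).2
      refine le_trans ?_ (ih (nbrIn G X v) ?_)
      · gcongr
      · refine hX.trans ?_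
        rw [pow_succ, mul_assoc]
        gcongr
    calc c ^ ((M + 1) ^ 2) * x ^ (M + 1)
        ≤ c ^ (M ^ 2 + M + 1) * x ^ (M + 1) := by
          gcongr ?_ * _
          exact pow_le_pow_of_le_one hc.le hc1 (by nlinarith)
      _ = (c * x) * (c ^ (M ^ 2) * (c * x) ^ M) := by rw [mul_pow]; ring
      _ ≤ S.card * (c ^ (M ^ 2) * (c * x) ^ M) := by gcongr
      _ = ∑ v ∈ S, c ^ (M ^ 2) * (c * x) ^ M := by simp
      _ ≤ ∑ v ∈ S, (cnt G M (nbrIn G X v) : ℝ) := Finset.sum_le_sum hstep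
      _ ≤ _ := Finset.sum_le_sum_of_subset_of_nonneg (Finset.filter_subset _ _)
          (fun _ _ _ => by positivity)

/-- peel off the first part -/
def homPeel {β : Type} (G : SimpleGraph β) {k : ℕ} (V : Fin (k + 1) → Type) :
    (SimpleGraph.completeMultipartiteGraph V →g G) ≃
      Σ φ : (SimpleGraph.completeMultipartiteGraph (fun i : Fin k => V i.succ) →g G),
        (V 0 → {v : β // ∀ a, G.Adj v (φ a)}) where
  toFun f := ⟨⟨fun a => f ⟨a.1.succ, a.2⟩, fun {a b} h => f.map_rel (by
      simp only [SimpleGraph.comap_adj, SimpleGraph.top_adj, ne_eq] at h ⊢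
      simpa using h)⟩,
    fun x => ⟨f ⟨0, x⟩, fun a => f.map_rel (by
      simp only [SimpleGraph.comap_adj, SimpleGraph.top_adj, ne_eq]
      exact (Fin.succ_ne_zero _).symm)⟩⟩
  invFun p := ⟨fun a => Fin.cases (motive := fun i => V i → β) (fun x => (p.2 x).1)
      (fun i x => p.1 ⟨i, x⟩) a.1 a.2, by
    rintro ⟨i, x⟩ ⟨j, y⟩ h
    simp only [SimpleGraph.comap_adj, SimpleGraph.top_adj, ne_eq] at h
    induction i using Fin.cases with
    | zero =>
      induction j using Fin.cases with
      | zero => exact absurd rfl h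
      | succ j => exact (p.2 x).2 ⟨j, y⟩
    | succ i =>
      induction j using Fin.cases with
      | zero => exact ((p.2 y).2 ⟨i, x⟩).symm
      | succ j =>
        refine p.1.map_rel ?_
        simp only [SimpleGraph.comap_adj, SimpleGraph.top_adj, ne_eq]
        simpa using h⟩
  left_inv f := by
    ext ⟨i, x⟩
    induction i using Fin.cases with
    | zero => rfl
    | succ i => rfl
  right_inv p := rfl

open Classical in
/-- common neighbourhood of an image -/
noncomputable def cn {α β : Type} [Fintype β] (G : SimpleGraph β) (φ : α → β) : Finset β :=
  Finset.univ.filter (fun v => ∀ a, G.Adj v (φ a))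

noncomputable instance homFintype {α β : Type} [Fintype α] [Fintype β] (H : SimpleGraph α)
    (G : SimpleGraph β) : Fintype (H →g G) := Fintype.ofFinite _

lemma card_peel {β : Type} [Fintype β] (G : SimpleGraph β) {k : ℕ} (R : Fin (k + 1) → ℕ) :
    Nat.card (SimpleGraph.completeMultipartiteGraph (fun i => Fin (R i)) →g G) =
      ∑ φ : (SimpleGraph.completeMultipartiteGraph (fun i : Fin k => Fin (R i.succ)) →g G),
        (cn G φ).card ^ (R 0) := by
  classical
  rw [Nat.card_congr (homPeel G _), Nat.card_sigma]
  refine Finset.sum_congr rfl fun φ _ => ?_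
  rw [Nat.card_fun, Nat.card_eq_fintype_card, Nat.card_eq_fintype_card, Fintype.card_subtype,
    Fintype.card_fin, cn]
  congr!

lemma card_peel2 {β : Type} [Fintype β] (G : SimpleGraph β) {k : ℕ} (r : Fin (k + 1) → ℕ) :
    Nat.card (SimpleGraph.completeMultipartiteGraph
        (fun i : Fin (k + 2) => Fin (Fin.cases 1 r i)) →g G) =
      ∑ φ : (SimpleGraph.completeMultipartiteGraph (fun i : Fin k => Fin (r i.succ)) →g G),
        ∑ v ∈ cn G φ, (nbrIn G (cn G φ) v).card ^ (r 0) := by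
  classical
  have h := card_peel G (k := k + 1) (fun i => Fin.cases 1 r i)
  refine h.trans ?_
  simp only [Fin.cases_zero, pow_one]
  change ∑ ψ : (SimpleGraph.completeMultipartiteGraph (fun i => Fin (r i)) →g G), (cn G ψ).card = _
  rw [← (homPeel G (fun i => Fin (r i))).symm.sum_comp, Fintype.sum_sigma]
  refine Finset.sum_congr rfl fun φ _ => ?_
  have key : ∀ w : Fin (r 0) → {v : β // ∀ a, G.Adj v (φ a)},
      (cn G ((homPeel G (fun i => Fin (r i))).symm ⟨φ, w⟩)).card =
        ∑ v ∈ cn G φ, if ∀ x, G.Adj v (w x) then 1 else 0 := by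
    intro w
    rw [← Finset.sum_filter, Finset.card_eq_sum_ones]
    refine Finset.sum_congr ?_ fun _ _ => rfl
    ext v
    simp only [cn, Finset.mem_filter, Finset.mem_univ, true_and]
    constructor
    · intro hv
      exact ⟨fun a => hv ⟨a.1.succ, a.2⟩, fun x => hv ⟨0, x⟩⟩
    · rintro ⟨h1, h2⟩ ⟨i, x⟩
      induction i using Fin.cases with
      | zero => exact h2 x
      | succ i => exact h1 ⟨i, x⟩
  rw [Finset.sum_congr rfl (fun w _ => key w), Finset.sum_comm]
  refine Finset.sum_congr rfl fun v _ => ?_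
  rw [← Finset.sum_filter, ← Finset.card_eq_sum_ones, ← Fintype.card_subtype]
  rw [Fintype.card_congr (Equiv.subtypePiEquivPi
    (p := fun (_ : Fin (r 0)) (w : {v : β // ∀ a, G.Adj v (φ a)}) => G.Adj v w))]
  rw [Fintype.card_pi, Finset.prod_const, Finset.card_univ, Fintype.card_fin]
  congr 1
  rw [Fintype.card_congr (Equiv.subtypeSubtypeEquivSubtypeInter _ _), Fintype.card_subtype]
  congr 1
  ext w
  simp [nbrIn, cn]

lemma local_ineq {β : Type} [Fintype β] {G : SimpleGraph β} {ρ d : ℝ} (hρ : 0 < ρ)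
    (hd : 0 < d) (hd1 : d ≤ 1)
    (hG : LocallyDense G ρ d) (N : Finset β) (s : ℕ) (hs : 1 ≤ s) :
    d ^ s * (N.card : ℝ) ^ (s + 1) - (ρ * Fintype.card β) ^ (s + 1) ≤
      ∑ v ∈ N, ((nbrIn G N v).card : ℝ) ^ s := by
  obtain ⟨t, rfl⟩ : ∃ t, s = t + 1 := ⟨s - 1, by omega⟩
  by_cases h : ρ * (Fintype.card β : ℝ) ≤ N.card
  · have h1 := dense_sum hG N h
    have hp : (0 : ℝ) ≤ (ρ * Fintype.card β) ^ (t + 1 + 1) := by positivity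
    refine le_trans (sub_le_self _ hp) ?_
    refine le_trans ?_ (pow_sum_div_card_le_sum_pow (s := N)
      (f := fun v => ((nbrIn G N v).card : ℝ)) (fun _ _ => by positivity) t)
    rcases Nat.eq_zero_or_pos N.card with h0 | hpos
    · simp [h0]
      positivity
    have hx : (0 : ℝ) < N.card := by exact_mod_cast hpos
    rw [le_div_iff₀ (by positivity)]
    calc d ^ (t + 1) * (N.card : ℝ) ^ (t + 1 + 1) * (N.card : ℝ) ^ t
        = (d * (N.card : ℝ) ^ 2) ^ (t + 1) := by ring
      _ ≤ _ := by gcongr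
  · push Not at h
    have : d ^ (t + 1) * (N.card : ℝ) ^ (t + 1 + 1) ≤ 1 * (ρ * Fintype.card β) ^ (t + 1 + 1) := by
      gcongr
      exact pow_le_one₀ hd.le hd1
    have h3 : 0 ≤ ∑ v ∈ N, ((nbrIn G N v).card : ℝ) ^ (t + 1) := by positivity
    linarith

theorem stmt10 (η : ℝ) (hη : 0 < η) (m : ℕ) (hm : 0 < m) (r : Fin m → ℕ)
    (hr : ∀ i, 1 ≤ r i) :
    ∃ (ρ : ℝ) (n₀ : ℕ), 0 < ρ ∧
      ∀ (d : ℝ), 0 < d → d ≤ 1 →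
        ∀ (β : Type) [Fintype β] (G : SimpleGraph β),
          n₀ ≤ Fintype.card β → LocallyDense G ρ d →
            homDensity
                (SimpleGraph.completeMultipartiteGraph
                  (fun i : Fin (m + 1) => Fin (Fin.cases 1 r i))) G
              ≥ (d ^ (r ⟨0, hm⟩) - η) *
                homDensity
                  (SimpleGraph.completeMultipartiteGraph
                    (fun i : Fin m => Fin (Function.update r ⟨0, hm⟩ (r ⟨0, hm⟩ + 1) i))) G := by
  obtain ⟨k, rfl⟩ : ∃ k, m = k + 1 := ⟨m - 1, by omega⟩
  change ∃ (ρ : ℝ) (n₀ : ℕ), 0 < ρ ∧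
      ∀ (d : ℝ), 0 < d → d ≤ 1 →
        ∀ (β : Type) [Fintype β] (G : SimpleGraph β),
          n₀ ≤ Fintype.card β → LocallyDense G ρ d →
            homDensity
                (SimpleGraph.completeMultipartiteGraph
                  (fun i : Fin (k + 1 + 1) => Fin (Fin.cases 1 r i))) G
              ≥ (d ^ (r 0) - η) *
                homDensity
                  (SimpleGraph.completeMultipartiteGraph
                    (fun i : Fin (k + 1) => Fin (Function.update r 0 (r 0 + 1) i))) G
  set R := Function.update r 0 (r 0 + 1) with hR
  have hR0 : R 0 = r 0 + 1 := by simp [hR]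
  have hRs : ∀ i : Fin k, R i.succ = r i.succ := by intro i; simp [hR]
  set s := r 0 with hs
  have hs1 : 1 ≤ s := hr 0
  set p : ℕ := ∑ i : Fin k, r i.succ with hp
  set M : ℕ := s + 1 + p with hM
  set c : ℝ := η / 2 with hc
  have hcpos : 0 < c := by positivity
  refine ⟨min 1 (min (c ^ M) (η * c ^ (M ^ 2))), 1, by positivity, ?_⟩
  set ρ := min 1 (min (c ^ M) (η * c ^ (M ^ 2))) with hρ
  have hρ0 : 0 < ρ := by positivity
  have hρ1 : ρ ≤ 1 := min_le_left _ _
  have hρ2 : ρ ≤ c ^ M := (min_le_right _ _).trans (min_le_left _ _)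
  have hρ3 : ρ ≤ η * c ^ (M ^ 2) := (min_le_right _ _).trans (min_le_right _ _)
  intro d hd hd1 β _ G hn hG
  set n : ℝ := (Fintype.card β : ℝ) with hndef
  have hn0 : (0 : ℝ) < n := by rw [hndef]; exact_mod_cast hn
  have hcardL : Fintype.card (Σ i : Fin (k + 1 + 1), Fin (Fin.cases 1 r i)) = M := by
    simp only [Fintype.card_sigma, Fintype.card_fin, Fin.sum_univ_succ, Fin.cases_zero,
      Fin.cases_succ]
    omega
  have hcardR : Fintype.card (Σ i : Fin (k + 1), Fin (R i)) = M := by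
    simp only [Fintype.card_sigma, Fintype.card_fin, Fin.sum_univ_succ, hR0, hRs]
    omega
  rw [ge_iff_le, homDensity, homDensity, hcardL, hcardR, ← mul_div_assoc]
  gcongr
  rcases le_or_gt (d ^ s) η with hle | hgt
  · exact (mul_nonpos_of_nonpos_of_nonneg (by linarith) (by positivity)).trans (by positivity)
  have hdη : η ≤ d := hgt.le.trans (pow_le_of_le_one hd.le hd1 (by omega))
  have hc1 : c ≤ 1 := by rw [hc]; linarith
  have hG' : LocallyDense G ρ (2 * c) := by
    intro X hX
    refine le_trans ?_ (hG X hX)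
    gcongr
    rw [hc]; linarith
  have hA := cnt_lower hcpos hc1 hG' M Finset.univ (by
    rw [Finset.card_univ]; gcongr)
  have hA2 := cnt_le_hom (SimpleGraph.completeMultipartiteGraph (fun i => Fin (R i))) G
  rw [hcardR] at hA2
  have hA3 : c ^ (M ^ 2) * n ^ M ≤
      (Nat.card (SimpleGraph.completeMultipartiteGraph (fun i => Fin (R i)) →g G) : ℝ) := by
    rw [Finset.card_univ] at hA
    exact hA.trans (by exact_mod_cast hA2)
  have hcA := card_peel G R
  rw [hR0] at hcA
  have hcA' : Nat.card (SimpleGraph.completeMultipartiteGraph (fun i => Fin (R i)) →g G) =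
      ∑ φ : (SimpleGraph.completeMultipartiteGraph (fun i : Fin k => Fin (r i.succ)) →g G),
        (cn G φ).card ^ (s + 1) := by
    rw [hcA]
    have : (fun i : Fin k => R i.succ) = fun i => r i.succ := funext hRs
    exact congrArg (fun T : Fin k → ℕ => 
      ∑ φ : (SimpleGraph.completeMultipartiteGraph (fun i : Fin k => Fin (T i)) →g G),
        (cn G φ).card ^ (s + 1)) this
  have hcB := card_peel2 G r
  have hΦ : (Fintype.card (SimpleGraph.completeMultipartiteGraph
      (fun i : Fin k => Fin (r i.succ)) →g G) : ℝ) ≤ n ^ p := by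
    classical
    have h1 := Fintype.card_le_of_injective
      (fun φ : (SimpleGraph.completeMultipartiteGraph
        (fun i : Fin k => Fin (r i.succ)) →g G) => (φ : _ → β)) DFunLike.coe_injective
    rw [Fintype.card_fun, Fintype.card_sigma] at h1
    simp only [Fintype.card_fin] at h1
    rw [hndef]
    exact_mod_cast h1
  set A := Nat.card (SimpleGraph.completeMultipartiteGraph (fun i => Fin (R i)) →g G)
  set B := Nat.card (SimpleGraph.completeMultipartiteGraph
        (fun i : Fin (k + 2) => Fin (Fin.cases 1 r i)) →g G)
  have hsum := Finset.sum_le_sum (fun (φ : (SimpleGraph.completeMultipartiteGraph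
      (fun i : Fin k => Fin (r i.succ)) →g G)) (_ : φ ∈ Finset.univ) =>
      local_ineq hρ0 hd hd1 hG (cn G φ) s hs1)
  rw [Finset.sum_sub_distrib, ← Finset.mul_sum, Finset.sum_const, Finset.card_univ,
    nsmul_eq_mul] at hsum
  have hAr : (A : ℝ) = ∑ φ : (SimpleGraph.completeMultipartiteGraph
      (fun i : Fin k => Fin (r i.succ)) →g G), ((cn G φ).card : ℝ) ^ (s + 1) := by
    rw [hcA']; push_cast; rfl
  have hBr : (B : ℝ) = ∑ φ : (SimpleGraph.completeMultipartiteGraph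
      (fun i : Fin k => Fin (r i.succ)) →g G),
        ∑ v ∈ cn G φ, ((nbrIn G (cn G φ) v).card : ℝ) ^ s := by
    rw [hcB]; push_cast; rfl
  rw [← hAr, ← hBr] at hsum
  have herr : (Fintype.card (SimpleGraph.completeMultipartiteGraph
      (fun i : Fin k => Fin (r i.succ)) →g G) : ℝ) * (ρ * n) ^ (s + 1) ≤ η * A := by
    calc _ ≤ n ^ p * (ρ * n) ^ (s + 1) := by gcongr
      _ = ρ ^ (s + 1) * n ^ M := by rw [hM]; ring
      _ ≤ ρ * n ^ M := by
        gcongr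
        exact pow_le_of_le_one hρ0.le hρ1 (by omega)
      _ ≤ (η * c ^ (M ^ 2)) * n ^ M := by gcongr
      _ = η * (c ^ (M ^ 2) * n ^ M) := by ring
      _ ≤ η * A := by gcongr
  change (d ^ s - η) * (A : ℝ) ≤ (B : ℝ)
  nlinarith
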